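/- Let V ⊆ [0,1] be compact with respect to the topology induced by the metric d_G, let D be an ultrafilter on a set I, let (M_i) be a family of nonempty sets indexed by I, and for each i let ψ_i : M_i → V. Suppose a ∈ [0,1] satisfies: the family i ↦ sup_{c ∈ M_i} ψ_i(c) converges to a along D (with respect to the d_G topology), and L : (Π_{i∈I} M_i) → [0,1] satisfies: for every b ∈ Π_{i∈I} M_i, the family i ↦ ψ_i(b_i) converges to L(b) along D (with respect to the d_G topology). Then a = sup_{b ∈ Π_{i∈I} M_i} L(b). -/

import Mathlib

open unitInterval

/-- The Gödel metric on `[0,1]`: `d_G(x,y) = max{x,y}` for `x ≠ y`, `d_G(x,x) = 0`. -/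
noncomputable def dG (x y : I) : ℝ :=
  if x = y then 0 else max (x : ℝ) (y : ℝ)

/-- The topology on `[0,1]` induced by the metric `d_G`
(generated by the open `d_G`-balls). -/
noncomputable def godelTop : TopologicalSpace I :=
  TopologicalSpace.generateFrom {U : Set I | ∃ (a : I) (r : ℝ), U = {y : I | dG a y < r}}

instance : Fact ((0:ℝ) ≤ 1) := ⟨zero_le_one⟩

theorem godel_ball_open (a : I) (r : ℝ) : @IsOpen I godelTop {y : I | dG a y < r} :=
  TopologicalSpace.isOpen_generateFrom_of_mem ⟨a, r, rfl⟩

theorem dist_le_dG (a y : I) : dist y a ≤ dG a y := by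
  unfold dG
  split_ifs with h
  · simp [h]
  · rw [Subtype.dist_eq, Real.dist_eq, abs_le]
    have h1 := a.2.1
    have h2 := y.2.1
    have h3 := le_max_left (a : ℝ) y
    have h4 := le_max_right (a : ℝ) y
    constructor <;> linarith

theorem godel_nhds_le (a : I) : @nhds I godelTop a ≤ nhds a := by
  intro s hs
  obtain ⟨e, he, hs⟩ := Metric.mem_nhds_iff.1 hs
  have h : {y : I | dG a y < e} ∈ @nhds I godelTop a :=
    @IsOpen.mem_nhds I godelTop a _ (godel_ball_open a e) (by simpa [dG] using he)
  refine Filter.mem_of_superset h fun y hy => hs ?_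
  exact lt_of_le_of_lt (dist_le_dG a y) hy

theorem godel_finite (V : Set I) (hV : @IsCompact I godelTop V) (v : I) (hv : 0 < v) :
    {y ∈ V | v ≤ y}.Finite := by
  have hv' : (0 : ℝ) < v := hv
  have hc : @IsClosed I godelTop {y : I | v ≤ y} := by
    rw [← @isOpen_compl_iff I _ godelTop]
    convert godel_ball_open 0 v using 1
    ext y
    simp only [Set.mem_compl_iff, Set.mem_setOf_eq, not_le, dG]
    split_ifs with h
    · subst h; exact ⟨fun _ => hv', fun _ => hv⟩
    · have h2 : ((0 : I) : ℝ) ≤ y := y.2.1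
      rw [max_eq_right h2]
      exact Iff.rfl
  have hK := @IsCompact.inter_right I godelTop _ _ hV hc
  obtain ⟨t, -, ht⟩ := @IsCompact.elim_nhds_subcover I godelTop _ hK
    (fun x => {y : I | dG x y < v}) (fun x _ =>
      @IsOpen.mem_nhds I godelTop x _ (godel_ball_open x v) (by simpa [dG] using hv'))
  refine t.finite_toSet.subset fun y hy => ?_
  obtain ⟨x, hx, hxy⟩ := Set.mem_iUnion₂.1 (ht hy)
  have hvy : (v : ℝ) ≤ y := hy.2
  simp only [Set.mem_setOf_eq, dG] at hxy
  split_ifs at hxy with h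
  · exact h ▸ hx
  · exact absurd (lt_of_le_of_lt (le_max_right _ _) hxy) (not_lt.2 hvy)

theorem godel_exists_max (V : Set I) (hV : @IsCompact I godelTop V) {M : Type*} [Nonempty M]
    (f : M → I) (hf : ∀ c, f c ∈ V) : ∃ c, ∀ d, f d ≤ f c := by
  by_cases h : ∃ c, 0 < f c
  · obtain ⟨c, hc⟩ := h
    have hfin : {y ∈ Set.range f | f c ≤ y}.Finite :=
      (godel_finite V hV (f c) hc).subset (by
        rintro _ ⟨⟨d, rfl⟩, h⟩
        exact ⟨hf d, h⟩)
    obtain ⟨_, ⟨⟨m, rfl⟩, hm⟩, hmax⟩ :=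
      Set.exists_max_image _ id hfin ⟨f c, ⟨c, rfl⟩, le_refl _⟩
    refine ⟨m, fun d => ?_⟩
    rcases le_total (f c) (f d) with h | h
    · exact hmax _ ⟨⟨d, rfl⟩, h⟩
    · exact h.trans hm
  · push Not at h
    exact ⟨Classical.arbitrary M, fun d => (h d).trans (Classical.arbitrary M |> f).2.1⟩

/-- The universal-quantifier step of the Łoś theorem for first-order Gödel logic:
if `sup_{c ∈ M_i} ψ_i(c)` converges to `a` along the ultrafilter `D` and, for every
`b ∈ Π_i M_i`, `ψ_i(b_i)` converges to `L(b)` along `D` (all limits taken in the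
`d_G`-topology, with values of `ψ` in a `d_G`-compact set `V`), then
`a = sup_{b} L(b)`. -/
theorem godel_los_forall_step {ι : Type*} (V : Set I)
    (hV : @IsCompact I godelTop V)
    (D : Ultrafilter ι) (M : ι → Type*) [∀ i, Nonempty (M i)]
    (ψ : ∀ i, M i → I) (hψ : ∀ (i : ι) (c : M i), ψ i c ∈ V)
    (a : I)
    (ha : Filter.Tendsto (fun i => ⨆ c : M i, ψ i c) (D : Filter ι) (@nhds I godelTop a))
    (L : (∀ i, M i) → I)
    (hL : ∀ b : ∀ i, M i,
      Filter.Tendsto (fun i => ψ i (b i)) (D : Filter ι) (@nhds I godelTop (L b))) :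
    a = ⨆ b : ∀ i, M i, L b := by
  choose b hb using fun i => godel_exists_max V hV (ψ i) (hψ i)
  have hs : ∀ i, ⨆ c : M i, ψ i c = ψ i (b i) := fun i =>
    le_antisymm (iSup_le (hb i)) (le_iSup (ψ i) (b i))
  simp only [hs] at ha
  have ha' := ha.mono_right (godel_nhds_le a)
  have hL' := fun c => (hL c).mono_right (godel_nhds_le (L c))
  apply le_antisymm
  · rw [tendsto_nhds_unique ha' (hL' b)]
    exact le_iSup L b
  · exact iSup_le fun c => le_of_tendsto_of_tendsto' (hL' c) ha' fun i => hb i (c i)
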